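/- Let μ ∈ M(ℝ²) satisfy ∫ p² dμ > 0 for every nonzero polynomial p in two variables, let {ℙ_k} be an orthonormal family with respect to μ with three-term coefficient matrices A_{k,i}, and let n ≥ 1. Suppose x_1, …, x_N ∈ ℝ² and λ_1, …, λ_N ∈ ℝ give a cubature formula of degree 2n−1 for μ, i.e. ∫ f dμ = Σ_{k=1}^N λ_k f(x_k) for every polynomial f of total degree at most 2n−1 (with distinct nodes x_k). Then N ≥ dim Π_{n−1}² + (1/2) rank(A_{n−1,1} A_{n−1,2}ᵀ − A_{n−1,2} A_{n−1,1}ᵀ). Furthermore, if μ is centrally symmetric (∫ x^α dμ = 0 for all α of odd total degree), then N ≥ dim Π_{n−1}² + ⌊n/2⌋. -/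

import Mathlib

open MvPolynomial Matrix MeasureTheory

noncomputable section

/-- Real polynomials in `d` variables. -/
abbrev MPoly (d : ℕ) : Type := MvPolynomial (Fin d) ℝ

/-- Multi-indices `α ∈ ℕ^d` of total degree `n`; there are `r_n^d = binom (n+d-1) n` of them. -/
abbrev Idx (d n : ℕ) : Type := {α : Fin d → ℕ // ∑ i, α i = n}

instance (d n : ℕ) : Fintype (Idx d n) :=
  Fintype.subtype (Finset.Nat.antidiagonalTuple d n)
    (fun _ => Finset.Nat.mem_antidiagonalTuple)

/-- The monomial `x^α`. -/
def mono {d : ℕ} (α : Fin d → ℕ) : MPoly d :=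
  MvPolynomial.monomial (Finsupp.equivFunOnFinite.symm α) 1

/-- Multi-indices `α ∈ ℕ^d` of total degree at most `n`. -/
abbrev IdxLe (d n : ℕ) : Type := {α : Fin d → ℕ // ∑ i, α i ≤ n}

instance (d n : ℕ) : Fintype (IdxLe d n) :=
  Fintype.subtype ((Finset.range (n+1)).biUnion fun k => Finset.Nat.antidiagonalTuple d k)
    (fun α => by
      simp only [Finset.mem_biUnion, Finset.mem_range, Finset.Nat.mem_antidiagonalTuple,
        Nat.lt_succ_iff]
      exact ⟨fun ⟨k, hk, he⟩ => he ▸ hk, fun h => ⟨_, h, rfl⟩⟩)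

/-- `P` is a polynomial of total degree strictly less than `n` (the zero polynomial belongs
to every such class). -/
def IsDegLt {d : ℕ} (P : MPoly d) (n : ℕ) : Prop := P = 0 ∨ P.totalDegree < n

/-- The family `{P m α : |α| = m ≤ n}` spans `Π_n^d`, the polynomials of total degree at
most `n`, for every `n`. -/
def SpansPi {d : ℕ} (P : ∀ n, Idx d n → MPoly d) : Prop :=
  ∀ n, Submodule.span ℝ {p | ∃ m, m ≤ n ∧ ∃ α : Idx d m, p = P m α} =
    MvPolynomial.restrictTotalDegree (Fin d) ℝ n

/-- `μ` has all moments finite, i.e. `μ ∈ M(ℝ²)`. -/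
def HasAllMoments (μ : Measure (Fin 2 → ℝ)) : Prop :=
  ∀ α : Fin 2 → ℕ, Integrable (fun x => ∏ i, x i ^ α i) μ

/-- The polynomials in two variables all of whose monomials have degree less than `n`. -/
def degreeLTSubmodule (n : ℕ) : Submodule ℝ (MPoly 2) where
  carrier := {p | ∀ s : Fin 2 →₀ ℕ, n ≤ s.degree → coeff s p = 0}
  add_mem' hp hq s hs := by simp [hp s hs, hq s hs]
  zero_mem' s _ := by simp
  smul_mem' c p hp s hs := by simp [hp s hs]

theorem degreeLTSubmodule_mono {m n : ℕ} (h : m ≤ n) :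
    degreeLTSubmodule m ≤ degreeLTSubmodule n :=
  fun _ hp s hs => hp s (h.trans hs)

theorem mem_degreeLTSubmodule_zero {p : MPoly 2} : p ∈ degreeLTSubmodule 0 ↔ p = 0 :=
  ⟨fun h => MvPolynomial.ext _ _ fun s => by simpa using h s (Nat.zero_le _),
    fun h => h ▸ zero_mem _⟩

theorem mem_degreeLTSubmodule_succ {n : ℕ} {p : MPoly 2} :
    p ∈ degreeLTSubmodule (n + 1) ↔ p.totalDegree ≤ n := by
  constructor
  · intro h
    refine Finset.sup_le fun s hs => ?_
    by_contra! hlt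
    exact mem_support_iff.mp hs (h s hlt)
  · intro h s hs
    exact coeff_eq_zero_of_totalDegree_lt (h.trans_lt hs)

theorem degreeLTSubmodule_succ (n : ℕ) :
    degreeLTSubmodule (n + 1) = restrictTotalDegree (Fin 2) ℝ n := by
  ext p
  rw [mem_degreeLTSubmodule_succ, mem_restrictTotalDegree]

theorem X_mul_mem_degreeLTSubmodule {n : ℕ} {p : MPoly 2} (i : Fin 2)
    (hp : p ∈ degreeLTSubmodule n) : X i * p ∈ degreeLTSubmodule (n + 1) := by
  intro s hs
  rw [coeff_X_mul']
  split_ifs with hi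
  · refine hp _ ?_
    have : s = (s - Finsupp.single i 1) + Finsupp.single i 1 :=
      (tsub_add_cancel_of_le (Finsupp.single_le_iff.mpr
        (Nat.one_le_iff_ne_zero.mpr (Finsupp.mem_support_iff.mp hi)))).symm
    rw [this, map_add, Finsupp.degree_single] at hs
    omega
  · rfl

theorem mul_totalDegree_le_of_mem_degreeLTSubmodule {m n : ℕ} {p q : MPoly 2}
    (hp : p ∈ degreeLTSubmodule (m + 1)) (hq : q ∈ degreeLTSubmodule (n + 1)) :
    (p * q).totalDegree ≤ m + n :=
  (totalDegree_mul p q).trans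
    (add_le_add (mem_degreeLTSubmodule_succ.mp hp) (mem_degreeLTSubmodule_succ.mp hq))

theorem homogeneousComponent_succ_X_mul (n : ℕ) (i : Fin 2) (p : MPoly 2) :
    homogeneousComponent (n + 1) (X i * p) = X i * homogeneousComponent n p := by
  ext s
  rw [coeff_homogeneousComponent, coeff_X_mul', coeff_X_mul']
  by_cases hi : i ∈ s.support
  · have hs : s = (s - Finsupp.single i 1) + Finsupp.single i 1 :=
      (tsub_add_cancel_of_le (Finsupp.single_le_iff.mpr
        (Nat.one_le_iff_ne_zero.mpr (Finsupp.mem_support_iff.mp hi)))).symm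
    have hd : s.degree = (s - Finsupp.single i 1).degree + 1 := by
      conv_lhs => rw [hs, map_add, Finsupp.degree_single]
    simp [hi, coeff_homogeneousComponent, hd]
  · simp [hi]

theorem homogeneousComponent_eq_zero_of_mem_degreeLTSubmodule {n : ℕ} {p : MPoly 2}
    (hp : p ∈ degreeLTSubmodule n) : homogeneousComponent n p = 0 := by
  ext s
  rw [coeff_homogeneousComponent, coeff_zero]
  split_ifs with h
  · exact hp s h.ge
  · rfl

theorem sub_homogeneousComponent_mem_degreeLTSubmodule {n : ℕ} {p : MPoly 2}
    (hp : p ∈ degreeLTSubmodule (n + 1)) :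
    p - homogeneousComponent n p ∈ degreeLTSubmodule n := by
  intro s hs
  rw [coeff_sub, coeff_homogeneousComponent]
  split_ifs with h
  · exact sub_self _
  · rw [hp s (by omega), sub_zero]

theorem exists_leading_quotient {k : ℕ} {r : Fin 2 → MPoly 2}
    (hr : ∀ i, r i ∈ degreeLTSubmodule (k + 2))
    (hd : X 0 * r 1 - X 1 * r 0 ∈ degreeLTSubmodule (k + 2)) :
    ∃ h ∈ degreeLTSubmodule (k + 1), ∀ i, r i - X i * h ∈ degreeLTSubmodule (k + 1) := by
  have key : X 0 * homogeneousComponent (k + 1) (r 1) =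
      X 1 * homogeneousComponent (k + 1) (r 0) := by
    have := homogeneousComponent_eq_zero_of_mem_degreeLTSubmodule hd
    rw [map_sub, homogeneousComponent_succ_X_mul, homogeneousComponent_succ_X_mul] at this
    exact sub_eq_zero.mp this
  have hdvd : (X 0 : MPoly 2) ∣ homogeneousComponent (k + 1) (r 0) := by
    have h : (X 0 : MPoly 2) ∣ X 1 * homogeneousComponent (k + 1) (r 0) := ⟨_, key.symm⟩
    refine ((X_prime (i := (0 : Fin 2)) (R := ℝ)).dvd_or_dvd h).resolve_left fun h01 => ?_
    simp [X_dvd_X] at h01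
  obtain ⟨e, he⟩ := hdvd
  have he1 : homogeneousComponent (k + 1) (r 1) = X 1 * e := by
    rw [he, mul_left_comm] at key
    exact mul_left_cancel₀ (X_ne_zero _) key
  have hlead : ∀ i, homogeneousComponent (k + 1) (r i) =
      X i * homogeneousComponent k e := by
    intro i
    rw [← homogeneousComponent_succ_X_mul]
    fin_cases i
    · simp [← he, homogeneousComponent_of_mem (homogeneousComponent_mem (k + 1) (r 0))]
    · simp [← he1, homogeneousComponent_of_mem (homogeneousComponent_mem (k + 1) (r 1))]
  refine ⟨homogeneousComponent k e, fun s hs => ?_, fun i => ?_⟩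
  · rw [coeff_homogeneousComponent, if_neg (by omega)]
  · rw [← hlead]
    exact sub_homogeneousComponent_mem_degreeLTSubmodule (hr i)

/-- The reflection `p ↦ p(-x)`. -/
def reflection : MPoly 2 →ₐ[ℝ] MPoly 2 := aeval fun i => -X i

theorem reflection_monomial (s : Fin 2 →₀ ℕ) (a : ℝ) :
    reflection (monomial s a) = (-1 : ℝ) ^ s.degree • monomial s a := by
  rw [reflection, aeval_monomial, monomial_eq, Finsupp.prod, Finsupp.prod, Finsupp.degree_apply]
  simp_rw [neg_pow (X _ : MPoly 2)]
  rw [Finset.prod_mul_distrib, Finset.prod_pow_eq_pow_sum, algebraMap_eq, smul_eq_C_mul]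
  simp only [map_pow, map_neg, map_one]
  ring

theorem coeff_reflection (p : MPoly 2) (s : Fin 2 →₀ ℕ) :
    coeff s (reflection p) = (-1) ^ s.degree * coeff s p := by
  induction p using MvPolynomial.induction_on' with
  | monomial u a =>
    rw [reflection_monomial, coeff_smul, smul_eq_mul, coeff_monomial]
    split_ifs with h
    · rw [h]
    · simp
  | add p q hp hq => rw [map_add, coeff_add, coeff_add, hp, hq, mul_add]

theorem reflection_mem_degreeLTSubmodule {n : ℕ} {p : MPoly 2}
    (hp : p ∈ degreeLTSubmodule n) : reflection p ∈ degreeLTSubmodule n := by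
  intro s hs
  rw [coeff_reflection, hp s hs, mul_zero]

/-- `P` is an orthonormal family for the definite functional `L`. -/
structure IsOrthonormalFamily (L : MPoly 2 →ₗ[ℝ] ℝ) (P : ∀ n, Idx 2 n → MPoly 2) : Prop where
  definite : ∀ p, L (p * p) = 0 → p = 0
  spans : SpansPi P
  orthonormal : ∀ n (α β : Idx 2 n), L (P n α * P n β) = if α = β then 1 else 0
  orthogonal : ∀ n m : ℕ, n ≠ m → ∀ (α : Idx 2 n) (β : Idx 2 m), L (P n α * P m β) = 0

/-- The polynomials of degree at most `n` that are orthogonal to all polynomials of lower degree. -/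
def orthogonalSpace (L : MPoly 2 →ₗ[ℝ] ℝ) (n : ℕ) : Submodule ℝ (MPoly 2) where
  carrier := {p | p ∈ degreeLTSubmodule (n + 1) ∧ ∀ q ∈ degreeLTSubmodule n, L (p * q) = 0}
  add_mem' hp hq :=
    ⟨add_mem hp.1 hq.1, fun g hg => by rw [add_mul, map_add, hp.2 g hg, hq.2 g hg, add_zero]⟩
  zero_mem' := ⟨zero_mem _, fun g _ => by simp⟩
  smul_mem' c p hp :=
    ⟨Submodule.smul_mem _ c hp.1, fun g hg => by
      rw [smul_mul_assoc, map_smul, hp.2 g hg, smul_zero]⟩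

theorem map_mul_eq_zero_of_mem_orthogonalSpace {L : MPoly 2 →ₗ[ℝ] ℝ} {m n : ℕ} {p q : MPoly 2}
    (hp : p ∈ orthogonalSpace L n) (hq : q ∈ degreeLTSubmodule m) (h : m ≤ n) :
    L (p * q) = 0 :=
  hp.2 q (degreeLTSubmodule_mono h hq)

namespace IsOrthonormalFamily

variable {L : MPoly 2 →ₗ[ℝ] ℝ} {P : ∀ n, Idx 2 n → MPoly 2}

theorem mem_degreeLTSubmodule (hP : IsOrthonormalFamily L P) (n : ℕ) (α : Idx 2 n) :
    P n α ∈ degreeLTSubmodule (n + 1) := by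
  rw [degreeLTSubmodule_succ, ← hP.spans n]
  exact Submodule.subset_span ⟨n, le_rfl, α, rfl⟩

theorem mem_orthogonalSpace (hP : IsOrthonormalFamily L P) (n : ℕ) (α : Idx 2 n) :
    P n α ∈ orthogonalSpace L n := by
  refine ⟨hP.mem_degreeLTSubmodule n α, fun q hq => ?_⟩
  cases n with
  | zero => simp [mem_degreeLTSubmodule_zero.mp hq]
  | succ n =>
    rw [degreeLTSubmodule_succ, ← hP.spans n] at hq
    induction hq using Submodule.span_induction with
    | mem q hq =>
      obtain ⟨m, hm, β, rfl⟩ := hq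
      exact hP.orthogonal _ _ (by omega) α β
    | zero => simp
    | add p q _ _ hp hq => rw [mul_add, map_add, hp, hq, add_zero]
    | smul c p _ hp => rw [mul_smul_comm, map_smul, hp, smul_zero]

theorem map_sum_smul_mul (hP : IsOrthonormalFamily L P) (n : ℕ) (c : Idx 2 n → ℝ)
    (β : Idx 2 n) : L ((∑ α, c α • P n α) * P n β) = c β := by
  simp [Finset.sum_mul, hP.orthonormal]

theorem exists_expansion (hP : IsOrthonormalFamily L P) {n : ℕ} {p : MPoly 2}
    (hp : p ∈ degreeLTSubmodule (n + 1)) :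
    ∃ c : Idx 2 n → ℝ, p - ∑ α, c α • P n α ∈ degreeLTSubmodule n := by
  rw [degreeLTSubmodule_succ, ← hP.spans n] at hp
  induction hp using Submodule.span_induction with
  | mem p hp =>
    obtain ⟨m, hm, β, rfl⟩ := hp
    rcases hm.lt_or_eq with hlt | rfl
    · exact ⟨0, by simpa using degreeLTSubmodule_mono hlt (hP.mem_degreeLTSubmodule m β)⟩
    · exact ⟨fun α => if α = β then 1 else 0, by simp⟩
  | zero => exact ⟨0, by simp⟩
  | add p q _ _ hp hq =>
    obtain ⟨c, hc⟩ := hp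
    obtain ⟨e, he⟩ := hq
    refine ⟨c + e, ?_⟩
    convert add_mem hc he using 1
    simp only [Pi.add_apply, add_smul, Finset.sum_add_distrib]
    ring
  | smul a p _ hp =>
    obtain ⟨c, hc⟩ := hp
    refine ⟨a • c, ?_⟩
    convert Submodule.smul_mem _ a hc using 1
    simp [smul_sub, Finset.smul_sum, smul_smul]

theorem sum_smul_mem (hP : IsOrthonormalFamily L P) (n : ℕ) (c : Idx 2 n → ℝ) :
    ∑ α, c α • P n α ∈ orthogonalSpace L n :=
  sum_mem fun α _ => Submodule.smul_mem _ _ (hP.mem_orthogonalSpace n α)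

theorem sub_projection_mem (hP : IsOrthonormalFamily L P) {n : ℕ} {p : MPoly 2}
    (hp : p ∈ degreeLTSubmodule (n + 1)) :
    p - ∑ α, L (p * P n α) • P n α ∈ degreeLTSubmodule n := by
  obtain ⟨c, hc⟩ := hP.exists_expansion hp
  have hcoef : ∀ α, L (p * P n α) = c α := by
    intro α
    have h := map_mul_eq_zero_of_mem_orthogonalSpace (hP.mem_orthogonalSpace n α) hc le_rfl
    rw [mul_comm, sub_mul, map_sub, hP.map_sum_smul_mul] at h
    exact sub_eq_zero.mp h
  simpa only [hcoef] using hc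

/-- A polynomial of degree at most `n` orthogonal to the orthogonal polynomials of degree `n`
has degree less than `n`. -/
theorem mem_degreeLTSubmodule_of_orthogonal (hP : IsOrthonormalFamily L P) {n : ℕ}
    {p : MPoly 2} (hp : p ∈ degreeLTSubmodule (n + 1))
    (h : ∀ g ∈ orthogonalSpace L n, L (p * g) = 0) : p ∈ degreeLTSubmodule n := by
  simpa [h _ (hP.mem_orthogonalSpace n _)] using hP.sub_projection_mem hp

theorem eq_zero_of_mem_of_mem (hP : IsOrthonormalFamily L P) {n : ℕ} {p : MPoly 2}
    (hp : p ∈ orthogonalSpace L n) (hlt : p ∈ degreeLTSubmodule n) : p = 0 :=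
  hP.definite p (hp.2 p hlt)

theorem eq_sum_of_mem (hP : IsOrthonormalFamily L P) {n : ℕ} {p : MPoly 2}
    (hp : p ∈ orthogonalSpace L n) : p = ∑ α, L (p * P n α) • P n α :=
  sub_eq_zero.mp <| hP.eq_zero_of_mem_of_mem (sub_mem hp (hP.sum_smul_mem n _))
    (hP.sub_projection_mem hp.1)

theorem reflection_eq (hP : IsOrthonormalFamily L P) (hL : ∀ p, L (reflection p) = L p)
    {n : ℕ} {p : MPoly 2} (hp : p ∈ orthogonalSpace L n) :
    reflection p = (-1 : ℝ) ^ n • p := by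
  refine sub_eq_zero.mp <| hP.eq_zero_of_mem_of_mem (n := n)
    (sub_mem ⟨reflection_mem_degreeLTSubmodule hp.1, fun q hq => ?_⟩
      (Submodule.smul_mem _ _ hp)) fun s hs => ?_
  · have hinv : reflection (reflection q) = q := by
      ext s
      rw [coeff_reflection, coeff_reflection, ← mul_assoc, ← mul_pow]
      simp
    have h := hL (p * reflection q)
    rw [map_mul reflection, hinv] at h
    rw [h]
    exact hp.2 _ (reflection_mem_degreeLTSubmodule hq)
  · rw [coeff_sub, coeff_reflection, coeff_smul, smul_eq_mul]
    rcases hs.eq_or_lt with rfl | hlt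
    · exact sub_self _
    · rw [hp.1 s hlt, mul_zero, mul_zero, sub_zero]

theorem map_X_mul_mul_eq_zero (hP : IsOrthonormalFamily L P) (hL : ∀ p, L (reflection p) = L p)
    {n : ℕ} {p q : MPoly 2} (i : Fin 2) (hp : p ∈ orthogonalSpace L n)
    (hq : q ∈ orthogonalSpace L n) : L (X i * p * q) = 0 := by
  have h := hL (X i * p * q)
  have hX : reflection (X i) = -X i := aeval_X _ _
  rw [map_mul reflection, map_mul reflection, hP.reflection_eq hL hp, hP.reflection_eq hL hq, hX] at h
  have hsq : ((-1 : ℝ) ^ n) * (-1) ^ n = 1 := by rw [← mul_pow]; simp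
  simp only [neg_mul, mul_smul_comm, smul_mul_assoc, smul_neg, smul_smul, hsq, one_smul,
    map_neg] at h
  linarith

end IsOrthonormalFamily

/-- `f` is an orthogonal polynomial of degree `k + 1` in the radical of the skew form
`(f, g) ↦ L (x₀ r₁ g) - L (x₁ r₀ g)`, where `rᵢ` is the component of `xᵢ f` of degree `k`. -/
def InSkewRadical (L : MPoly 2 →ₗ[ℝ] ℝ) (k : ℕ) (f : MPoly 2) : Prop :=
  f ∈ orthogonalSpace L (k + 1) ∧ ∃ q r : Fin 2 → MPoly 2,
    (∀ i, q i ∈ orthogonalSpace L (k + 2)) ∧ (∀ i, r i ∈ orthogonalSpace L k) ∧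
    (∀ i, X i * f = q i + r i) ∧
    ∀ g ∈ orthogonalSpace L (k + 1), L (X 0 * r 1 * g) = L (X 1 * r 0 * g)

/-- The orthogonal polynomials `f` of degree `k + 2` and `h` of degree `k` are such that, for each
`i`, the component of `xᵢ f` of degree `k + 1` agrees with `xᵢ h` up to lower degree. -/
def DescendsTo (L : MPoly 2 →ₗ[ℝ] ℝ) (k : ℕ) (f h : MPoly 2) : Prop :=
  f ∈ orthogonalSpace L (k + 2) ∧ h ∈ orthogonalSpace L k ∧ ∃ q r : Fin 2 → MPoly 2,
    (∀ i, q i ∈ orthogonalSpace L (k + 3)) ∧ (∀ i, r i ∈ orthogonalSpace L (k + 1)) ∧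
    (∀ i, X i * f = q i + r i) ∧ ∀ i, r i - X i * h ∈ degreeLTSubmodule (k + 1)

theorem DescendsTo.linear_combination {L : MPoly 2 →ₗ[ℝ] ℝ} {k : ℕ} {f h f' h' : MPoly 2}
    (H : DescendsTo L k f h) (H' : DescendsTo L k f' h') (a b : ℝ) :
    DescendsTo L k (a • f + b • f') (a • h + b • h') := by
  obtain ⟨hf, hh, q, r, hq, hr, hqr, hrh⟩ := H
  obtain ⟨hf', hh', q', r', hq', hr', hqr', hrh'⟩ := H'
  have comb : ∀ {V : Submodule ℝ (MPoly 2)} {u v : MPoly 2}, u ∈ V → v ∈ V →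
      a • u + b • v ∈ V := fun hu hv =>
    add_mem (Submodule.smul_mem _ _ hu) (Submodule.smul_mem _ _ hv)
  refine ⟨comb hf hf', comb hh hh', fun i => a • q i + b • q' i, fun i => a • r i + b • r' i,
    fun i => comb (hq i) (hq' i), fun i => comb (hr i) (hr' i), fun i => ?_, fun i => ?_⟩
  · rw [mul_add, mul_smul_comm, mul_smul_comm, hqr, hqr', smul_add, smul_add]
    ring
  · convert comb (hrh i) (hrh' i) using 1
    rw [mul_add, mul_smul_comm, mul_smul_comm, smul_sub, smul_sub]
    ring

namespace IsOrthonormalFamily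

variable {L : MPoly 2 →ₗ[ℝ] ℝ} {P : ∀ n, Idx 2 n → MPoly 2}

theorem eq_zero_of_X_mul_mem (hP : IsOrthonormalFamily L P) {n : ℕ} {f : MPoly 2}
    (hf : f ∈ orthogonalSpace L (n + 1)) (hX : ∀ i, X i * f ∈ orthogonalSpace L (n + 2)) :
    f = 0 := by
  refine hP.definite f ?_
  have hmon : ∀ s ∈ f.support, L (f * monomial s (coeff s f)) = 0 := by
    intro s hs
    have hdeg : s.degree ≤ n + 1 := by
      by_contra! h
      exact mem_support_iff.mp hs (hf.1 s h)
    by_cases h0 : s = 0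
    · refine hf.2 _ fun t ht => ?_
      rw [coeff_monomial, if_neg]
      rintro rfl
      simp [h0] at ht
    · obtain ⟨i, hi⟩ := Finsupp.ne_iff.mp h0
      have hs' : s = Finsupp.single i 1 + (s - Finsupp.single i 1) :=
        (add_tsub_cancel_of_le (Finsupp.single_le_iff.mpr (Nat.one_le_iff_ne_zero.mpr hi))).symm
      have hd : s.degree = 1 + (s - Finsupp.single i 1).degree := by
        conv_lhs => rw [hs', map_add, Finsupp.degree_single]
      have hm : monomial s (coeff s f) =
          X i * monomial (s - Finsupp.single i 1) (coeff s f) := by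
        rw [X, monomial_mul, one_mul, ← hs']
      rw [hm, mul_left_comm, ← mul_assoc]
      refine (hX i).2 _ fun t ht => ?_
      rw [coeff_monomial, if_neg]
      rintro rfl
      omega
  conv_lhs => enter [2, 2]; rw [f.as_sum]
  rw [Finset.mul_sum, map_sum]
  exact Finset.sum_eq_zero hmon

theorem eq_zero_of_descendsTo_zero (hP : IsOrthonormalFamily L P) {k : ℕ} {f : MPoly 2}
    (H : DescendsTo L k f 0) : f = 0 := by
  obtain ⟨hf, -, q, r, hq, hr, hqr, hrh⟩ := H
  refine hP.eq_zero_of_X_mul_mem hf fun i => ?_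
  have hr0 : r i = 0 := hP.eq_zero_of_mem_of_mem (hr i) (by simpa using hrh i)
  rw [hqr, hr0, add_zero]
  exact hq i

theorem exists_descendsTo (hP : IsOrthonormalFamily L P) {k : ℕ} {f : MPoly 2}
    (H : InSkewRadical L (k + 1) f) : ∃ h, DescendsTo L k f h := by
  obtain ⟨hf, q, r, hq, hr, hqr, hskew⟩ := H
  have hdiff : X 0 * r 1 - X 1 * r 0 ∈ degreeLTSubmodule (k + 2) := by
    refine hP.mem_degreeLTSubmodule_of_orthogonal
      (sub_mem (X_mul_mem_degreeLTSubmodule 0 (hr 1).1) (X_mul_mem_degreeLTSubmodule 1 (hr 0).1))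
      fun g hg => ?_
    rw [sub_mul, map_sub, hskew g hg, sub_self]
  obtain ⟨e, he, hre⟩ := exists_leading_quotient (fun i => (hr i).1) hdiff
  refine ⟨∑ α, L (e * P k α) • P k α, hf, hP.sum_smul_mem k _, q, r, hq, hr, hqr, fun i => ?_⟩
  convert add_mem (hre i) (X_mul_mem_degreeLTSubmodule i (hP.sub_projection_mem he)) using 1
  ring

theorem X_mul_sub_mem_orthogonalSpace (hP : IsOrthonormalFamily L P)
    (hL : ∀ p, L (reflection p) = L p) {k : ℕ} {f q : MPoly 2} (i : Fin 2)
    (hf : f ∈ orthogonalSpace L (k + 1)) (hq : q ∈ orthogonalSpace L (k + 2))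
    (hd : X i * f - q ∈ degreeLTSubmodule (k + 2)) :
    X i * f - q ∈ orthogonalSpace L k := by
  refine ⟨hP.mem_degreeLTSubmodule_of_orthogonal hd fun g hg => ?_, fun g hg => ?_⟩
  · rw [sub_mul, map_sub, hP.map_X_mul_mul_eq_zero hL i hf hg, hq.2 g hg.1, sub_zero]
  · rw [sub_mul, map_sub, map_mul_eq_zero_of_mem_orthogonalSpace hq hg (by omega), sub_zero,
      mul_comm (X i), mul_assoc]
    exact hf.2 _ (X_mul_mem_degreeLTSubmodule i hg)

theorem inSkewRadical_of_descendsTo (hP : IsOrthonormalFamily L P)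
    (hL : ∀ p, L (reflection p) = L p) {k : ℕ} {f h : MPoly 2}
    (H : DescendsTo L (k + 1) f h) : InSkewRadical L k h := by
  obtain ⟨hf, hh, q, r, hq, hr, hqr, hrh⟩ := H
  refine ⟨hh, r, fun i => X i * h - r i, hr, fun i => ?_, fun i => by ring, fun g hg => ?_⟩
  · refine hP.X_mul_sub_mem_orthogonalSpace hL i hh (hr i) ?_
    simpa using neg_mem (hrh i)
  · have hzero : ∀ i j, L (X i * q j * g) = 0 := by
      intro i j
      rw [mul_comm (X i), mul_assoc]
      exact map_mul_eq_zero_of_mem_orthogonalSpace (hq j)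
        (X_mul_mem_degreeLTSubmodule i hg.1) (by omega)
    have hr' : ∀ i, r i = X i * f - q i := fun i => by rw [hqr]; ring
    have h01 : X 0 * (X 1 * h - r 1) * g =
        X 1 * (X 0 * h - r 0) * g + X 0 * q 1 * g - X 1 * q 0 * g := by
      rw [hr' 0, hr' 1]; ring
    rw [h01, map_sub, map_add, hzero, hzero, add_zero, sub_zero]

theorem exists_eq_C_of_mem_orthogonalSpace_zero {f : MPoly 2} (hf : f ∈ orthogonalSpace L 0) :
    ∃ a, f = C a :=
  ⟨_, totalDegree_eq_zero_iff_eq_C.mp (Nat.le_zero.mp (mem_degreeLTSubmodule_succ.mp hf.1))⟩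

theorem exists_dependence_of_mem_orthogonalSpace_zero {f f' : MPoly 2}
    (hf : f ∈ orthogonalSpace L 0) (hf' : f' ∈ orthogonalSpace L 0) :
    ∃ a b : ℝ, (a ≠ 0 ∨ b ≠ 0) ∧ a • f + b • f' = 0 := by
  obtain ⟨u, rfl⟩ := exists_eq_C_of_mem_orthogonalSpace_zero hf
  obtain ⟨v, rfl⟩ := exists_eq_C_of_mem_orthogonalSpace_zero hf'
  by_cases hu : u = 0
  · exact ⟨1, 0, by simp, by simp [hu]⟩
  · refine ⟨v, -u, by simp [hu], ?_⟩
    simp only [smul_eq_C_mul, ← map_mul, ← map_add]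
    rw [show v * u + -u * v = 0 by ring, map_zero]

theorem eq_zero_of_inSkewRadical_zero (hP : IsOrthonormalFamily L P) {f : MPoly 2}
    (H : InSkewRadical L 0 f) : f = 0 := by
  obtain ⟨hf, q, r, hq, hr, hqr, hskew⟩ := H
  have hdiff : X 0 * r 1 - X 1 * r 0 ∈ degreeLTSubmodule 1 := by
    refine hP.mem_degreeLTSubmodule_of_orthogonal
      (sub_mem (X_mul_mem_degreeLTSubmodule 0 (hr 1).1) (X_mul_mem_degreeLTSubmodule 1 (hr 0).1))
      fun g hg => ?_
    rw [sub_mul, map_sub, hskew g hg, sub_self]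
  refine hP.eq_zero_of_X_mul_mem hf fun i => ?_
  obtain ⟨u, hu⟩ := exists_eq_C_of_mem_orthogonalSpace_zero (hr 0)
  obtain ⟨v, hv⟩ := exists_eq_C_of_mem_orthogonalSpace_zero (hr 1)
  have h0 := hdiff (Finsupp.single 0 1) (by simp)
  have h1 := hdiff (Finsupp.single 1 1) (by simp)
  rw [hu, hv, mul_comm, mul_comm (X 1), coeff_sub, coeff_C_mul, coeff_C_mul, coeff_X, coeff_X]
    at h0 h1
  have hr0 : r i = 0 := by
    fin_cases i <;> simp_all [Finsupp.single_left_inj]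
  rw [hqr, hr0, add_zero]
  exact hq i

theorem eq_zero_of_inSkewRadical_even (hP : IsOrthonormalFamily L P)
    (hL : ∀ p, L (reflection p) = L p) (j : ℕ) {f : MPoly 2}
    (H : InSkewRadical L (2 * j) f) : f = 0 := by
  induction j generalizing f with
  | zero => exact hP.eq_zero_of_inSkewRadical_zero H
  | succ j ih =>
    obtain ⟨h, hh⟩ := hP.exists_descendsTo (k := 2 * j + 1) H
    rw [ih (hP.inSkewRadical_of_descendsTo hL hh)] at hh
    exact hP.eq_zero_of_descendsTo_zero hh

theorem exists_dependence_of_inSkewRadical_odd (hP : IsOrthonormalFamily L P)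
    (hL : ∀ p, L (reflection p) = L p) (j : ℕ) {f f' : MPoly 2}
    (H : InSkewRadical L (2 * j + 1) f) (H' : InSkewRadical L (2 * j + 1) f') :
    ∃ a b : ℝ, (a ≠ 0 ∨ b ≠ 0) ∧ a • f + b • f' = 0 := by
  induction j generalizing f f' with
  | zero =>
    obtain ⟨h, hh⟩ := hP.exists_descendsTo H
    obtain ⟨h', hh'⟩ := hP.exists_descendsTo H'
    obtain ⟨a, b, hab, he⟩ := exists_dependence_of_mem_orthogonalSpace_zero hh.2.1 hh'.2.1
    exact ⟨a, b, hab, hP.eq_zero_of_descendsTo_zero (he ▸ hh.linear_combination hh' a b)⟩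
  | succ j ih =>
    obtain ⟨h, hh⟩ := hP.exists_descendsTo (k := 2 * j + 2) H
    obtain ⟨h', hh'⟩ := hP.exists_descendsTo (k := 2 * j + 2) H'
    obtain ⟨a, b, hab, he⟩ := ih (hP.inSkewRadical_of_descendsTo hL hh)
      (hP.inSkewRadical_of_descendsTo hL hh')
    exact ⟨a, b, hab, hP.eq_zero_of_descendsTo_zero (he ▸ hh.linear_combination hh' a b)⟩

end IsOrthonormalFamily

theorem card_idx_two (n : ℕ) : Fintype.card (Idx 2 n) = n + 1 := by
  rw [Fintype.card_of_subtype _ (fun _ => Finset.Nat.mem_antidiagonalTuple),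
    Finset.Nat.antidiagonalTuple_two, Finset.card_map, Finset.Nat.card_antidiagonal]

theorem card_sigma_idx_two (m : ℕ) :
    Fintype.card (Σ k : Fin (m + 1), Idx 2 k) = (m + 2).choose 2 := by
  rw [Fintype.card_sigma]
  simp only [card_idx_two]
  rw [Fin.sum_univ_eq_sum_range (fun k => k + 1)]
  induction m with
  | zero => rfl
  | succ m ih =>
    rw [Finset.sum_range_succ, ih, Nat.choose_succ_succ' (m + 2) 1, Nat.choose_one_right]
    ring

/-- The coefficient matrix of `ℙ_{k+1}` in the three-term relation for `xᵢ ℙ_k`. -/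
def threeTermMatrix (L : MPoly 2 →ₗ[ℝ] ℝ) (P : ∀ n, Idx 2 n → MPoly 2) (k : ℕ) (i : Fin 2) :
    Matrix (Idx 2 k) (Idx 2 (k + 1)) ℝ :=
  Matrix.of fun α β => L (X i * P k α * P (k + 1) β)

/-- The skew-symmetric matrix `A_{k,0} A_{k,1}ᵀ - A_{k,1} A_{k,0}ᵀ`. -/
def threeTermCommutator (L : MPoly 2 →ₗ[ℝ] ℝ) (P : ∀ n, Idx 2 n → MPoly 2) (k : ℕ) :
    Matrix (Idx 2 k) (Idx 2 k) ℝ :=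
  threeTermMatrix L P k 0 * (threeTermMatrix L P k 1)ᵀ -
    threeTermMatrix L P k 1 * (threeTermMatrix L P k 0)ᵀ

namespace IsOrthonormalFamily

variable {L : MPoly 2 →ₗ[ℝ] ℝ} {P : ∀ n, Idx 2 n → MPoly 2}

theorem inSkewRadical_of_mulVec_eq_zero (hP : IsOrthonormalFamily L P)
    (hL : ∀ p, L (reflection p) = L p) {k : ℕ} {v : Idx 2 (k + 1) → ℝ}
    (hv : threeTermCommutator L P (k + 1) *ᵥ v = 0) :
    InSkewRadical L k (∑ α, v α • P (k + 1) α) := by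
  set f := ∑ α, v α • P (k + 1) α with hfdef
  have hf : f ∈ orthogonalSpace L (k + 1) := hP.sum_smul_mem _ _
  set q : Fin 2 → MPoly 2 := fun i => ∑ β, L (X i * f * P (k + 2) β) • P (k + 2) β with hqdef
  have hq : ∀ i, q i ∈ orthogonalSpace L (k + 2) := fun i => hP.sum_smul_mem _ _
  have hcoef : ∀ i β, L (X i * f * P (k + 2) β) = ((threeTermMatrix L P (k + 1) i)ᵀ *ᵥ v) β := by
    intro i β
    simp [hfdef, Finset.mul_sum, mulVec, dotProduct, threeTermMatrix, mul_comm]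
  have hXq : ∀ i j α, L (X i * q j * P (k + 1) α) =
      (threeTermMatrix L P (k + 1) i *ᵥ ((threeTermMatrix L P (k + 1) j)ᵀ *ᵥ v)) α := by
    intro i j α
    rw [mulVec, dotProduct]
    simp only [hqdef, Finset.mul_sum, Finset.sum_mul, map_sum]
    refine Finset.sum_congr rfl fun β _ => ?_
    rw [mul_smul_comm, smul_mul_assoc, map_smul, smul_eq_mul, hcoef, mul_comm, mul_right_comm]
    rfl
  have hsym : ∀ g ∈ orthogonalSpace L (k + 1), L (X 0 * q 1 * g) = L (X 1 * q 0 * g) := by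
    intro g hg
    rw [hP.eq_sum_of_mem hg]
    simp only [Finset.mul_sum, mul_smul_comm, map_sum, map_smul, hXq]
    refine Finset.sum_congr rfl fun α _ => ?_
    have := congrFun hv α
    rw [threeTermCommutator, sub_mulVec, Pi.sub_apply, ← mulVec_mulVec, ← mulVec_mulVec] at this
    rw [sub_eq_zero.mp this]
  refine ⟨hf, q, fun i => X i * f - q i, hq, fun i => ?_, fun i => by ring, fun g hg => ?_⟩
  · exact hP.X_mul_sub_mem_orthogonalSpace hL i hf (hq i)
      (hP.sub_projection_mem (X_mul_mem_degreeLTSubmodule i hf.1))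
  · have h01 : X 0 * (X 1 * f - q 1) * g =
        X 1 * (X 0 * f - q 0) * g - X 0 * q 1 * g + X 1 * q 0 * g := by ring
    rw [h01, map_add, map_sub, hsym g hg, sub_add_cancel]

theorem eq_zero_of_sum_smul_eq_zero (hP : IsOrthonormalFamily L P) {n : ℕ} {v : Idx 2 n → ℝ}
    (h : ∑ α, v α • P n α = 0) : v = 0 := by
  ext β
  rw [← hP.map_sum_smul_mul n v β, h, zero_mul, map_zero, Pi.zero_apply]

theorem two_mul_half_le_rank (hP : IsOrthonormalFamily L P)
    (hL : ∀ p, L (reflection p) = L p) (m : ℕ) :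
    2 * ((m + 1) / 2) ≤ (threeTermCommutator L P m).rank := by
  have hrn := (threeTermCommutator L P m).mulVecLin.finrank_range_add_finrank_ker
  rw [Module.finrank_fintype_fun_eq_card, card_idx_two] at hrn
  change (threeTermCommutator L P m).rank + _ = _ at hrn
  rcases m with _ | k
  · simp
  rcases Nat.even_or_odd' k with ⟨j, rfl | rfl⟩
  · have hker : LinearMap.ker (threeTermCommutator L P (2 * j + 1)).mulVecLin = ⊥ := by
      rw [LinearMap.ker_eq_bot']
      intro v hv
      exact hP.eq_zero_of_sum_smul_eq_zero
        (hP.eq_zero_of_inSkewRadical_even hL j (hP.inSkewRadical_of_mulVec_eq_zero hL hv))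
    rw [hker, finrank_bot] at hrn
    omega
  · have hker : Module.finrank ℝ
        (LinearMap.ker (threeTermCommutator L P (2 * j + 1 + 1)).mulVecLin) ≤ 1 := by
      by_contra! hlt
      have := Module.finrank_pos_iff.mp (zero_lt_one.trans hlt)
      obtain ⟨u, hu⟩ := exists_ne
        (0 : LinearMap.ker (threeTermCommutator L P (2 * j + 1 + 1)).mulVecLin)
      refine hlt.not_ge (finrank_le_one u fun v => ?_)
      obtain ⟨a, b, hab, h⟩ := hP.exists_dependence_of_inSkewRadical_odd hL j
        (hP.inSkewRadical_of_mulVec_eq_zero hL u.2) (hP.inSkewRadical_of_mulVec_eq_zero hL v.2)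
      have hdep : a • u + b • v = 0 := by
        apply Subtype.ext
        refine hP.eq_zero_of_sum_smul_eq_zero ?_
        rw [← h]
        simp [Finset.smul_sum, ← Finset.sum_add_distrib, add_smul, smul_smul]
      have hb : b ≠ 0 := by
        rintro rfl
        simp_all
      refine ⟨-(b⁻¹ * a), ?_⟩
      have : b⁻¹ • (a • u + b • v) = 0 := by rw [hdep, smul_zero]
      rw [smul_add, smul_smul, smul_smul, inv_mul_cancel₀ hb, one_smul] at this
      rw [neg_smul]
      exact neg_eq_of_add_eq_zero_right this
    omega

end IsOrthonormalFamily

theorem Matrix.rank_sub_le_add {m n : Type*} [Fintype m] [Fintype n] (A B : Matrix m n ℝ) :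
    (A - B).rank ≤ A.rank + B.rank := by
  have h : LinearMap.range (A - B).mulVecLin ≤
      LinearMap.range A.mulVecLin ⊔ LinearMap.range B.mulVecLin := by
    rintro _ ⟨v, rfl⟩
    rw [mulVecLin_apply, sub_mulVec]
    exact sub_mem (Submodule.mem_sup_left ⟨v, rfl⟩) (Submodule.mem_sup_right ⟨v, rfl⟩)
  exact (Submodule.finrank_mono h).trans (Submodule.finrank_add_le_finrank_add_finrank _ _)

/-- A cubature formula of degree `2 m + 1` with `N` nodes satisfies
`2 dim Π_m + rank (A_{m,0} A_{m,1}ᵀ - A_{m,1} A_{m,0}ᵀ) ≤ 2 N`. -/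
theorem IsOrthonormalFamily.two_mul_choose_add_rank_le {L : MPoly 2 →ₗ[ℝ] ℝ}
    {P : ∀ n, Idx 2 n → MPoly 2} (hP : IsOrthonormalFamily L P)
    (m N : ℕ) (x : Fin N → (Fin 2 → ℝ)) (w : Fin N → ℝ)
    (hcub : ∀ f : MPoly 2, f.totalDegree ≤ 2 * m + 1 → L f = ∑ k, w k * eval (x k) f) :
    2 * (m + 2).choose 2 + (threeTermCommutator L P m).rank ≤ 2 * N := by
  set ev : MPoly 2 →ₗ[ℝ] ℝ := ∑ k, w k • (MvPolynomial.aeval (R := ℝ) (x k)).toLinearMap with hev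
  have hev_apply : ∀ f, ev f = ∑ k, w k * eval (x k) f := by
    intro f
    simp [hev, aeval_eq_eval]
  have hcub' : ∀ f : MPoly 2, f.totalDegree ≤ 2 * m + 1 → ev f = L f := fun f hf => by
    rw [hev_apply, hcub f hf]
  set A := threeTermMatrix L P m with hA
  set q : Fin 2 → Idx 2 m → MPoly 2 := fun i α => ∑ β, A i α β • P (m + 1) β with hqdef
  have hq : ∀ i α, q i α ∈ orthogonalSpace L (m + 1) := fun i α => hP.sum_smul_mem _ _
  set p : Fin 2 → Idx 2 m → MPoly 2 := fun i α => X i * P m α - q i α with hpdef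
  have hp : ∀ i α, p i α ∈ degreeLTSubmodule (m + 1) := fun i α =>
    hP.sub_projection_mem (X_mul_mem_degreeLTSubmodule i (hP.mem_degreeLTSubmodule m α))
  have hLqp : ∀ i α, ∀ p ∈ degreeLTSubmodule (m + 1), L (q i α * p) = 0 := fun i α => (hq i α).2
  have hqp : ∀ i α, ∀ p ∈ degreeLTSubmodule (m + 1), ev (q i α * p) = 0 := by
    intro i α p hp
    rw [hcub', hLqp i α p hp]
    have := mul_totalDegree_le_of_mem_degreeLTSubmodule (hq i α).1 hp
    omega
  have hLqq : ∀ i j α β, L (q i α * q j β) = (A i * (A j)ᵀ) α β := by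
    intro i j α β
    conv_lhs => enter [2, 2]; rw [hqdef]
    simp only [Finset.mul_sum, mul_smul_comm, map_sum, map_smul]
    rw [Matrix.mul_apply]
    refine Finset.sum_congr rfl fun γ _ => ?_
    rw [hqdef, hP.map_sum_smul_mul, smul_eq_mul, mul_comm, transpose_apply]
  have hcomm : ∀ α β, ev (q 0 α * q 1 β) - ev (q 1 α * q 0 β) =
      threeTermCommutator L P m α β := by
    intro α β
    have hpp : ∀ i j, ev (p i α * p j β) = L (p i α * p j β) := by
      intro i j
      refine hcub' _ ?_
      have := mul_totalDegree_le_of_mem_degreeLTSubmodule (hp i α) (hp j β)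
      omega
    have hid : q 0 α * q 1 β - q 1 α * q 0 β =
        (p 1 α * p 0 β - p 0 α * p 1 β) + (q 1 α * p 0 β + q 0 β * p 1 α)
          - (q 0 α * p 1 β + q 1 β * p 0 α) := by
      simp only [hpdef]
      ring
    have h1 := congrArg ev hid
    have h2 := congrArg L hid
    simp only [map_sub, map_add, hpp, hqp _ _ _ (hp _ _), hLqp _ _ _ (hp _ _)] at h1 h2
    rw [h1, ← h2, hLqq, hLqq]
    rfl
  let V : Matrix (Fin N) (Σ k : Fin (m + 1), Idx 2 k) ℝ := Matrix.of fun k s =>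
    eval (x k) (P s.1 s.2)
  let Q : Fin 2 → Matrix (Idx 2 m) (Fin N) ℝ := fun i => Matrix.of fun α k => eval (x k) (q i α)
  have hPmem : ∀ s : Σ k : Fin (m + 1), Idx 2 k, P s.1 s.2 ∈ degreeLTSubmodule (m + 1) :=
    fun s => degreeLTSubmodule_mono (by omega) (hP.mem_degreeLTSubmodule s.1 s.2)
  have hVV : Vᵀ * diagonal w * V = 1 := by
    ext s t
    have hst : (Vᵀ * diagonal w * V) s t = ev (P s.1 s.2 * P t.1 t.2) := by
      rw [hev_apply, Matrix.mul_apply]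
      refine Finset.sum_congr rfl fun k _ => ?_
      simp only [V, mul_diagonal, transpose_apply, Matrix.of_apply, map_mul]
      ring
    have hdeg := mul_totalDegree_le_of_mem_degreeLTSubmodule (hPmem s) (hPmem t)
    rw [hst, hcub' _ (by omega)]
    obtain ⟨k, α⟩ := s
    obtain ⟨l, β⟩ := t
    by_cases hkl : k = l
    · subst hkl
      rw [hP.orthonormal, Matrix.one_apply]
      simp
    · rw [hP.orthogonal _ _ (fun h => hkl (Fin.ext h)), Matrix.one_apply_ne]
      intro h
      exact hkl (congrArg Sigma.fst h)
  have hVrank : (m + 2).choose 2 ≤ V.rank := by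
    have h := Matrix.rank_mul_le_right (Vᵀ * diagonal w) V
    rwa [hVV, Matrix.rank_one, card_sigma_idx_two] at h
  have hQrank : ∀ i, (Q i * diagonal w).rank + (m + 2).choose 2 ≤ N := by
    intro i
    have hzero : Q i * diagonal w * V = 0 := by
      ext α s
      have h := hqp i α _ (hPmem s)
      rw [hev_apply] at h
      rw [Matrix.zero_apply, ← h, Matrix.mul_apply]
      refine Finset.sum_congr rfl fun k _ => ?_
      simp only [V, Q, mul_diagonal, Matrix.of_apply, map_mul]
      ring
    have h := Matrix.rank_add_rank_le_card_of_mul_eq_zero hzero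
    rw [Fintype.card_fin] at h
    omega
  have hK : threeTermCommutator L P m =
      Q 0 * diagonal w * (Q 1)ᵀ - Q 1 * diagonal w * (Q 0)ᵀ := by
    have hQQ : ∀ i j α β, (Q i * diagonal w * (Q j)ᵀ) α β = ev (q i α * q j β) := by
      intro i j α β
      rw [hev_apply, Matrix.mul_apply]
      refine Finset.sum_congr rfl fun k _ => ?_
      simp only [Q, mul_diagonal, transpose_apply, Matrix.of_apply, map_mul]
      ring
    ext α β
    rw [Matrix.sub_apply, hQQ, hQQ, hcomm]
  have h1 := Matrix.rank_sub_le_add (Q 0 * diagonal w * (Q 1)ᵀ) (Q 1 * diagonal w * (Q 0)ᵀ)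
  rw [← hK] at h1
  have h2 := Matrix.rank_mul_le_left (Q 0 * diagonal w) (Q 1)ᵀ
  have h3 := Matrix.rank_mul_le_left (Q 1 * diagonal w) (Q 0)ᵀ
  have h4 := hQrank 0
  have h5 := hQrank 1
  omega

theorem HasAllMoments.integrable_eval {μ : Measure (Fin 2 → ℝ)} (hμ : HasAllMoments μ)
    (p : MPoly 2) : Integrable (fun y => eval y p) μ := by
  simp only [eval_eq']
  exact integrable_finsetSum _ fun s _ => (hμ s).const_mul _

/-- The moment functional `p ↦ ∫ p dμ`. -/
def momentFunctional {μ : Measure (Fin 2 → ℝ)} (hμ : HasAllMoments μ) : MPoly 2 →ₗ[ℝ] ℝ where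
  toFun p := ∫ y, eval y p ∂μ
  map_add' p q := by
    simp only [map_add]
    exact integral_add (hμ.integrable_eval p) (hμ.integrable_eval q)
  map_smul' c p := by
    simp only [smul_eval, integral_const_mul, RingHom.id_apply, smul_eq_mul]

theorem momentFunctional_reflection {μ : Measure (Fin 2 → ℝ)} (hμ : HasAllMoments μ)
    (hsymm : ∀ α : Fin 2 → ℕ, Odd (∑ i, α i) → ∫ y, ∏ i, y i ^ α i ∂μ = 0) (p : MPoly 2) :
    momentFunctional hμ (reflection p) = momentFunctional hμ p := by
  induction p using MvPolynomial.induction_on' with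
  | monomial s a =>
    rw [reflection_monomial, map_smul]
    rcases Nat.even_or_odd s.degree with hs | hs
    · rw [hs.neg_one_pow, one_smul]
    · have h0 : momentFunctional hμ (monomial s a) = 0 := by
        change ∫ y, eval y (monomial s a) ∂μ = 0
        simp only [eval_monomial, Finsupp.prod_fintype _ _ (fun _ => pow_zero _)]
        rw [integral_const_mul, hsymm s (by rwa [Finsupp.degree_eq_sum] at hs), mul_zero]
      rw [h0, smul_zero]
  | add p q hp hq => rw [map_add, map_add, map_add, hp, hq]

/-- Lower bounds for the number of nodes of a cubature formula of degree `2n-1` (`n = m+1`)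
in two variables: `N ≥ dim Π_{n-1}² + ½ rank(A_{n-1,1} A_{n-1,2}ᵀ − A_{n-1,2} A_{n-1,1}ᵀ)`,
and `N ≥ dim Π_{n-1}² + ⌊n/2⌋` (Möller's bound) when `μ` is centrally symmetric. -/
theorem cubature_lower_bounds_two_variables
    (μ : Measure (Fin 2 → ℝ))
    (hmom : HasAllMoments μ)
    (hpos : ∀ p : MPoly 2, p ≠ 0 → 0 < ∫ x, (eval x p) ^ 2 ∂μ)
    (P : ∀ n, Idx 2 n → MPoly 2)
    (hdeg : ∀ n (α : Idx 2 n), (P n α).totalDegree = n)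
    (hspan : SpansPi P)
    (hon : ∀ n (α β : Idx 2 n),
      ∫ x, eval x (P n α) * eval x (P n β) ∂μ = if α = β then 1 else 0)
    (hoff : ∀ n m : ℕ, n ≠ m → ∀ (α : Idx 2 n) (β : Idx 2 m),
      ∫ x, eval x (P n α) * eval x (P m β) ∂μ = 0)
    (A : ∀ k : ℕ, Fin 2 → Matrix (Idx 2 k) (Idx 2 (k+1)) ℝ)
    (hA : ∀ (k : ℕ) (i : Fin 2) (α : Idx 2 k) (β : Idx 2 (k+1)),
      A k i α β = ∫ x, eval x (X i * P k α * P (k+1) β) ∂μ)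
    (m N : ℕ) (x : Fin N → (Fin 2 → ℝ)) (w : Fin N → ℝ)
    (hinj : Function.Injective x)
    (hcub : ∀ f : MPoly 2, f.totalDegree ≤ 2 * m + 1 →
      ∫ y, eval y f ∂μ = ∑ k, w k * eval (x k) f) :
    (((m + 2).choose 2 : ℝ) +
      (1 / 2) * ((A m 0 * (A m 1)ᵀ - A m 1 * (A m 0)ᵀ).rank : ℝ) ≤ (N : ℝ)) ∧
    ((∀ α : Fin 2 → ℕ, Odd (∑ i, α i) → ∫ y, ∏ i, y i ^ α i ∂μ = 0) →
      (m + 2).choose 2 + (m + 1) / 2 ≤ N) := by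
  have hP : IsOrthonormalFamily (momentFunctional hmom) P := by
    refine ⟨fun p hp => ?_, hspan, fun n α β => ?_, fun n k hnk α β => ?_⟩
    · by_contra hne
      refine (hpos p hne).ne' ?_
      rw [← hp]
      simp [momentFunctional, sq]
    · simpa [momentFunctional] using hon n α β
    · simpa [momentFunctional] using hoff n k hnk α β
  have hAeq : ∀ i, A m i = threeTermMatrix (momentFunctional hmom) P m i := fun i => by
    ext α β
    exact hA m i α β
  have hK : A m 0 * (A m 1)ᵀ - A m 1 * (A m 0)ᵀ =
      threeTermCommutator (momentFunctional hmom) P m := by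
    rw [hAeq, hAeq, threeTermCommutator]
  have hmain := hP.two_mul_choose_add_rank_le m N x w hcub
  rw [hK]
  constructor
  · have : (2 : ℝ) * ((m + 2).choose 2 : ℝ) +
        ((threeTermCommutator (momentFunctional hmom) P m).rank : ℝ) ≤ 2 * N := by
      exact_mod_cast hmain
    linarith
  · intro hsymm
    have := hP.two_mul_half_le_rank (momentFunctional_reflection hmom hsymm) m
    omega
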